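/- For every causal model M, every (u, v) ∈ R(U ∪ V) with P_M(u, v) > 0, and all Y, X ⊆ V, y ∈ R(Y), x ∈ R(X): the B-probability of the basic counterfactual equals the probability of the basic counterfactual computed in the PO-SCM, conditional on the exogenous and endogenous variables of M: P^B(y_x | u, v) = P^N(y_x | u, v) (where the conditioning on the right is on U = u and V = v only, not on the potential outcome variables). -/

import Mathlib

/-!
Fix the potential outcomes of the PO-SCM to a configuration `b`, of probability `Q b`. What is
left is a deterministic model `Mb b` on the original variables, with
`P^N(v, b) = P_{Mb b}(v) * Q b`, and the PO-SCM probability of a basic counterfactual at the world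
`(a, b)` is the one computed in `Mb b` at `a` (`MN_cfBasic`). In any model, the factor `P(U = u)`
cancels from `P_{do(X = xv)}(Y = yv | U = u)`, since truncated factorizations are normalized
(`sum_trunc_eq_one`); the remaining sum over worlds `v` is `core` (`cfBasic_eq_core`).

It remains to average `core (Mb b)` over `b` with weight `P^N(a, b)`, and by linearity to do so for
each `v` separately (`sum_Mb`). The potential outcomes are independent, so this average factors
over pairs of an endogenous variable `i` and a value of its parents. The actual world `a` pins the
outcome at the actual parents, contributing `P(a i | pa)`; the world `v` pins the outcome at its
own parents. If these parent values coincide, the second requirement reduces to `v i = a i`; if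
not, it is independent of the first and has the original conditional probability. This is exactly
the conditional table of the actualized refinement (`prod_PaAsg`). Dividing by
`P^N(a) = P(a) > 0` gives the B-probability.
-/

open Finset

noncomputable section

attribute [local instance] Classical.propDecidable

/-- An assignment of values to the variables. -/
abbrev Asg {ν : Type} (Val : ν → Type) : Type := (i : ν) → Val i

/-- A probabilistic causal model (a causal Bayesian network with explicit exogenous
variables): a signature (variables `ν` with value sets `Val`), a graph given by the
parent map `pa` (with `ord` a witness of acyclicity, and the variables in `exo` being
the roots), and a joint probability distribution that is Markov relative to the graph,
presented by the conditional probability table `cpt i w x = P(i = x | pa i = w|_{pa i})`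
of each variable given its parents (for exogenous variables this is the marginal). -/
structure CM (ν : Type) (Val : ν → Type) : Type where
  exo : Finset ν
  pa : ν → Finset ν
  ord : ν → ℕ
  cpt : (i : ν) → Asg Val → Val i → ℝ

/-- A basic counterfactual event `(Y = yv)_{X ← xv}`. -/
structure CFEvent (ν : Type) (Val : ν → Type) : Type where
  X : Finset ν
  xv : Asg Val
  Y : Finset ν
  yv : Asg Val

namespace CM

variable {ν : Type} {Val : ν → Type}

/-- Well-formedness of a causal model: exogenous variables are roots, the graph is
acyclic, the conditional probability table of each variable depends only on its
parents, and each table is a probability distribution. -/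
structure WF [Fintype ν] [∀ i, Fintype (Val i)] (M : CM ν Val) : Prop where
  pa_exo : ∀ i ∈ M.exo, M.pa i = ∅
  acyclic : ∀ i j, j ∈ M.pa i → M.ord j < M.ord i
  cpt_pa : ∀ (i : ν) (w w' : Asg Val) (x : Val i),
    (∀ j ∈ M.pa i, w j = w' j) → M.cpt i w x = M.cpt i w' x
  cpt_nonneg : ∀ i w x, 0 ≤ M.cpt i w x
  cpt_sum : ∀ i w, ∑ x, M.cpt i w x = 1

variable [Fintype ν] [∀ i, Fintype (Val i)] [∀ i, Nonempty (Val i)]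

variable (M : CM ν Val)

/-- The joint distribution `P(U = u, V = v)` (Markov factorization). -/
def joint (w : Asg Val) : ℝ := ∏ i, M.cpt i w (w i)

/-- The interventional distribution `P_{do(X = xv)}` (truncated factorization). -/
def pdo (X : Finset ν) (xv w : Asg Val) : ℝ :=
  if ∀ i ∈ X, w i = xv i then ∏ i ∈ Xᶜ, M.cpt i w (w i) else 0

/-- `P_{do(X = xv)}(Y = yv | U = u)`, where `u` is the exogenous part of `w`:
the probability of the basic counterfactual `(Y = yv)_{X ← xv}` given the world `w`. -/
def cfBasic (X : Finset ν) (xv : Asg Val) (Y : Finset ν) (yv : Asg Val) (w : Asg Val) : ℝ :=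
  (∑ w' : Asg Val,
      if (∀ i ∈ M.exo, w' i = w i) ∧ ∀ i ∈ Y, w' i = yv i then M.pdo X xv w' else 0) /
  (∑ w' : Asg Val, if ∀ i ∈ M.exo, w' i = w i then M.pdo X xv w' else 0)

/-- The probability of a complex counterfactual
`P(y_x, …, z_w) = Σ_{(u,v)} P(y_x | u,v) ⋯ P(z_w | u,v) P(u,v)`. -/
def cfProb (evs : List (CFEvent ν Val)) : ℝ :=
  ∑ w : Asg Val, (evs.map fun e => M.cfBasic e.X e.xv e.Y e.yv w).prod * M.joint w

/-- Conditional probability of a complex counterfactual given an actual event `Z = zv`: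
`P(y_x, …, z_w | Z = zv) = P(y_x, …, z_w, Z = zv) / P(Z = zv)`. -/
def cfProbCond (evs : List (CFEvent ν Val)) (Z : Finset ν) (zv : Asg Val) : ℝ :=
  (∑ w : Asg Val,
      (if ∀ i ∈ Z, w i = zv i then (evs.map fun e => M.cfBasic e.X e.xv e.Y e.yv w).prod
       else 0) * M.joint w) /
  (∑ w : Asg Val, if ∀ i ∈ Z, w i = zv i then M.joint w else 0)

/-- `M` is a structural causal model: every endogenous variable is a deterministic
function of its parents (the exogenous variables are automatically mutually
independent in this presentation). -/
def IsSCM : Prop :=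
  ∀ i ∉ M.exo, ∀ (w : Asg Val) (x : Val i), M.cpt i w x = 0 ∨ M.cpt i w x = 1

/-- The actualized refinement `M^{(u,v)}` of `M` at the actual world `a`:
for each endogenous variable, the conditional distribution given the *actual* values of
its parents is replaced by the point mass at the actual value of the variable. -/
def refine (a : Asg Val) : CM ν Val where
  exo := M.exo
  pa := M.pa
  ord := M.ord
  cpt := fun i w x =>
    if i ∉ M.exo ∧ ∀ j ∈ M.pa i, w j = a j then (if x = a i then 1 else 0)
    else M.cpt i w x

/-- The B-semantics probability of a basic counterfactual,
`P^B((Y = yv)_{X ← xv} | a) = (P^{a})_{do(X = xv)}(Y = yv | U = u)` where `u` is the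
exogenous part of the actual world `a`. -/
def pbBasic (a : Asg Val) (X : Finset ν) (xv : Asg Val) (Y : Finset ν) (yv : Asg Val) : ℝ :=
  (M.refine a).cfBasic X xv Y yv a

/-- The B-semantics probability of a complex counterfactual. -/
def pbProb (evs : List (CFEvent ν Val)) : ℝ :=
  ∑ w : Asg Val, (evs.map fun e => M.pbBasic w e.X e.xv e.Y e.yv).prod * M.joint w

/-- The conditional B-semantics probability of a complex counterfactual given `Z = zv`. -/
def pbProbCond (evs : List (CFEvent ν Val)) (Z : Finset ν) (zv : Asg Val) : ℝ :=
  (∑ w : Asg Val,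
      (if ∀ i ∈ Z, w i = zv i then (evs.map fun e => M.pbBasic w e.X e.xv e.Y e.yv).prod
       else 0) * M.joint w) /
  (∑ w : Asg Val, if ∀ i ∈ Z, w i = zv i then M.joint w else 0)

/-- An assignment of values to the parents of `i`. -/
def PaAsg (i : ν) : Type := (j : {j : ν // j ∈ M.pa i}) → Val j.1

instance (i : ν) : Fintype (M.PaAsg i) := by unfold PaAsg; infer_instance
instance (i : ν) : Nonempty (M.PaAsg i) := ⟨fun j => Classical.arbitrary (Val j.1)⟩

/-- Extend an assignment of the parents of `i` to a full assignment (arbitrarily). -/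
def extendPa (i : ν) (κ : M.PaAsg i) : Asg Val :=
  fun j => if h : j ∈ M.pa i then κ ⟨j, h⟩ else Classical.arbitrary (Val j)

/-- The index type of the potential outcome variables `X_{pa_X}` of the PO-SCM:
one for each endogenous variable `X` and each value `pa_X` of its parents. -/
def POI : Type := Σ i : {i : ν // i ∉ M.exo}, M.PaAsg i.1

instance : Fintype (POI M) := by unfold POI; infer_instance

/-- The value set of the potential outcome variable `X_{pa_X}` is that of `X`. -/
def POB : POI M → Type := fun p => Val p.1.1

instance (p : POI M) : Fintype (POB M p) := by unfold POB; infer_instance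
instance (p : POI M) : Nonempty (POB M p) := by unfold POB; infer_instance

/-- The type of values of the response variable `U_X` of the canonical frame:
functions from values of the parents of `X` to values of `X`. -/
def RType (i : ν) : Type := M.PaAsg i → Val i

instance (i : ν) : Fintype (M.RType i) := by unfold RType; infer_instance
instance (i : ν) : Nonempty (M.RType i) := ⟨fun _ => Classical.arbitrary (Val i)⟩

/-- The index type of the response variables of the canonical frame:
one for each endogenous variable. -/
def RVI : Type := {i : ν // i ∉ M.exo}

instance : Fintype (RVI M) := by unfold RVI; infer_instance

/-- The value set of the response variable `U_X`. -/
def RB : RVI M → Type := fun p => M.RType p.1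

instance (p : RVI M) : Fintype (RB M p) := by unfold RB; infer_instance
instance (p : RVI M) : Nonempty (RB M p) := by unfold RB; infer_instance

end CM

/-- The family of value sets of an extended signature `ν ⊕ β`. -/
def SumVal {ν β : Type} (Val : ν → Type) (B : β → Type) : ν ⊕ β → Type := fun i =>
  match i with
  | .inl j => Val j
  | .inr b => B b

section SumValInst

variable {ν β : Type} {Val : ν → Type} {B : β → Type}

instance [∀ i, Fintype (Val i)] [∀ b, Fintype (B b)] (i : ν ⊕ β) :
    Fintype (SumVal Val B i) := by
  cases i with
  | inl j => exact inferInstanceAs (Fintype (Val j))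
  | inr b => exact inferInstanceAs (Fintype (B b))

instance [∀ i, Nonempty (Val i)] [∀ b, Nonempty (B b)] (i : ν ⊕ β) :
    Nonempty (SumVal Val B i) := by
  cases i with
  | inl j => exact inferInstanceAs (Nonempty (Val j))
  | inr b => exact inferInstanceAs (Nonempty (B b))

/-- Lift an assignment on `ν` to one on `ν ⊕ β` (arbitrary on the new variables). -/
def liftAsg [∀ b, Nonempty (B b)] (xv : Asg Val) : Asg (SumVal Val B) := fun i =>
  match i with
  | .inl j => xv j
  | .inr b => Classical.arbitrary (B b)

/-- Lift a counterfactual event on the original variables to the extended signature. -/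
def liftCFEvent [∀ b, Nonempty (B b)] (e : CFEvent ν Val) : CFEvent (ν ⊕ β) (SumVal Val B) :=
  ⟨e.X.image Sum.inl, liftAsg e.xv, e.Y.image Sum.inl, liftAsg e.yv⟩

variable [Fintype ν] [Fintype β] [∀ i, Fintype (Val i)] [∀ b, Fintype (B b)]
  [∀ i, Nonempty (Val i)] [∀ b, Nonempty (B b)]

/-- The probability, computed in a model `N` over an extended signature, of a complex
counterfactual over the original variables. -/
def extProb (N : CM (ν ⊕ β) (SumVal Val B)) (evs : List (CFEvent ν Val)) : ℝ :=
  N.cfProb (evs.map liftCFEvent)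

/-- The probability, computed in a model `N` over an extended signature, of a complex
counterfactual over the original variables, conditional on an actual event `Z = zv`
over the original variables. -/
def extProbCond (N : CM (ν ⊕ β) (SumVal Val B)) (evs : List (CFEvent ν Val))
    (Z : Finset ν) (zv : Asg Val) : ℝ :=
  N.cfProbCond (evs.map liftCFEvent) (Z.image Sum.inl) (liftAsg zv)

/-- The probability, computed in a model `N` over an extended signature, of a basic
counterfactual conditional on the values `a` of *all* the original variables
(marginalizing over the added exogenous variables), via the law of total probability. -/
def extBasicCond (N : CM (ν ⊕ β) (SumVal Val B)) (a : Asg Val)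
    (X : Finset ν) (xv : Asg Val) (Y : Finset ν) (yv : Asg Val) : ℝ :=
  (∑ w : Asg (SumVal Val B),
      if ∀ i : ν, w (Sum.inl i) = a i then
        N.cfBasic (X.image Sum.inl) (liftAsg xv) (Y.image Sum.inl) (liftAsg yv) w * N.joint w
      else 0) /
  (∑ w : Asg (SumVal Val B), if ∀ i : ν, w (Sum.inl i) = a i then N.joint w else 0)

end SumValInst

namespace CM

variable {ν : Type} {Val : ν → Type} [Fintype ν] [∀ i, Fintype (Val i)] [∀ i, Nonempty (Val i)]
variable (M : CM ν Val)

/-- The PO-SCM `M^N` of `M`: the structural causal model obtained from `M` by adding,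
for each endogenous variable `X` and each value `pa_X` of its parents, an exogenous
potential outcome variable `X_{pa_X}` (with marginal `P_M(X | Pa_X = pa_X)`, all
exogenous variables mutually independent), and the structural equation
`X = X_{pa_X}` whenever `Pa_X = pa_X`. -/
def MN : CM (ν ⊕ POI M) (SumVal Val (POB M)) where
  exo := (M.exo.image Sum.inl) ∪ (univ.image Sum.inr)
  pa := fun i =>
    match i with
    | .inl j => ((M.pa j).image Sum.inl) ∪
        ((univ.filter fun p : POI M => p.1.1 = j).image Sum.inr)
    | .inr _ => ∅
  ord := fun i =>
    match i with
    | .inl j => M.ord j + 1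
    | .inr _ => 0
  cpt := fun i =>
    match i with
    | .inl j => fun w x =>
        if h : j ∈ M.exo then M.cpt j (fun k => w (Sum.inl k)) x
        else if x = w (Sum.inr ⟨⟨j, h⟩, fun k => w (Sum.inl k.1)⟩) then 1 else 0
    | .inr p => fun _ x => M.cpt p.1.1 (M.extendPa p.1.1 p.2) x

/-- `P^N(y_x, …, z_w)`: the probability of a complex counterfactual computed in the
PO-SCM `M^N`. -/
def pnProb (evs : List (CFEvent ν Val)) : ℝ := extProb M.MN evs

/-- `P^N(y_x, …, z_w | Z = zv)`: the conditional probability of a complex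
counterfactual computed in the PO-SCM `M^N`, given an actual event on the
endogenous variables. -/
def pnProbCond (evs : List (CFEvent ν Val)) (Z : Finset ν) (zv : Asg Val) : ℝ :=
  extProbCond M.MN evs Z zv

/-- `P^N((Y = yv)_{X ← xv} | U = u, V = v)`: the probability of a basic counterfactual
computed in the PO-SCM `M^N`, conditional on the exogenous and endogenous variables of
`M` only (marginalizing over the potential outcome variables). -/
def pnBasicCond (a : Asg Val) (X : Finset ν) (xv : Asg Val) (Y : Finset ν) (yv : Asg Val) : ℝ :=
  extBasicCond M.MN a X xv Y yv

/-- A canonical SCM for `M`, determined by a distribution `q` of the response variables: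
the SCM over the canonical frame, which adds for each endogenous variable `X` an
exogenous response variable `U_X` ranging over the functions `f_X : R(Pa_X) → R(X)`,
with the structural equation `X = f_X(Pa_X)` where `f_X` is the value of `U_X`. -/
def canonSCM (q : (p : RVI M) → RType M p.1 → ℝ) : CM (ν ⊕ RVI M) (SumVal Val (RB M)) where
  exo := (M.exo.image Sum.inl) ∪ (univ.image Sum.inr)
  pa := fun i =>
    match i with
    | .inl j => ((M.pa j).image Sum.inl) ∪
        ((univ.filter fun p : RVI M => p.1 = j).image Sum.inr)
    | .inr _ => ∅
  ord := fun i =>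
    match i with
    | .inl j => M.ord j + 1
    | .inr _ => 0
  cpt := fun i =>
    match i with
    | .inl j => fun w x =>
        if h : j ∈ M.exo then M.cpt j (fun k => w (Sum.inl k)) x
        else if x = w (Sum.inr ⟨j, h⟩) (fun k => w (Sum.inl k.1)) then 1 else 0
    | .inr p => fun _ x => q p x

/-- `q` is the distribution of the response variables of a canonical SCM for `M`:
it is a probability distribution (the response variables being mutually independent and
independent of the exogenous variables of `M`, whose distribution is kept), and it
reproduces the conditional probability tables of `M`:
`P_M(X = x | Pa_X = pa_X) = Σ_{f_X with f_X(pa_X) = x} P(U_X = f_X)`. -/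
def IsCanonicalDist (q : (p : RVI M) → RType M p.1 → ℝ) : Prop :=
  (∀ p x, 0 ≤ q p x) ∧ (∀ p, ∑ f, q p f = 1) ∧
  ∀ (p : RVI M) (κ : M.PaAsg p.1) (x : Val p.1),
    M.cpt p.1 (M.extendPa p.1 κ) x = ∑ f ∈ univ.filter (fun f : RType M p.1 => f κ = x), q p f

/-- The distribution of the response variables of the GH-SCM:
`P(U_X = f_X) = ∏_{pa_X} P_M(X = f_X(pa_X) | Pa_X = pa_X)`. -/
def qGH : (p : RVI M) → RType M p.1 → ℝ := fun p f =>
  ∏ κ : M.PaAsg p.1, M.cpt p.1 (M.extendPa p.1 κ) (f κ)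

end CM

/-- A default assignment. -/
def dfltAsg {ν : Type} (Val : ν → Type) [∀ i, Nonempty (Val i)] : Asg Val :=
  fun i => Classical.arbitrary (Val i)

namespace CM

/-! ### Truncated factorizations and cancellation of the exogenous factor -/

/-- Truncated factorizations are normalized: fixing the variables in `F` to `c` and letting the
remaining ones be drawn from the conditional tables along the acyclic graph gives total mass one.
The induction fixes a not yet fixed variable of minimal order, all of whose parents are fixed. -/
lemma sum_trunc_eq_one {ν : Type} {Val : ν → Type} [Fintype ν] [∀ i, Fintype (Val i)]
    (M : CM ν Val) (hM : M.WF) :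
    ∀ (n : ℕ) (F : Finset ν) (c : Asg Val), Fᶜ.card = n →
      (∑ w : Asg Val, if ∀ i ∈ F, w i = c i then ∏ i ∈ Fᶜ, M.cpt i w (w i) else 0) = 1 := by
  intro n
  induction n with
  | zero =>
    intro F c hF
    have hF' : F = univ := by simpa using hF
    subst hF'
    rw [Finset.sum_eq_single c]
    · simp
    · intro w _ hw
      rw [if_neg]
      intro h
      exact hw (funext fun i => h i (mem_univ i))
    · simp
  | succ n ih =>
    intro F c hF
    have hne : (Fᶜ).Nonempty := by
      rw [← Finset.card_pos]; omega
    obtain ⟨i, hi, hmin⟩ := Finset.exists_min_image Fᶜ M.ord hne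
    have hiF : i ∉ F := by simpa using hi
    have hpa : ∀ j ∈ M.pa i, j ∈ F := by
      intro j hj
      by_contra hjF
      have h1 := hmin j (by simpa using hjF)
      have h2 := hM.acyclic i j hj
      omega
    have hcard : ((insert i F)ᶜ).card = n := by
      rw [Finset.compl_insert, Finset.card_erase_of_mem hi, hF]; rfl
    have hsplit : ∀ w : Asg Val,
        (if ∀ j ∈ F, w j = c j then ∏ j ∈ Fᶜ, M.cpt j w (w j) else 0) =
        ∑ x : Val i, M.cpt i c x *
          (if ∀ j ∈ insert i F, w j = Function.update c i x j then
            ∏ j ∈ (insert i F)ᶜ, M.cpt j w (w j) else 0) := by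
      intro w
      rw [Finset.sum_eq_single (w i)]
      · have hiff : (∀ j ∈ insert i F, w j = Function.update c i (w i) j) ↔
            ∀ j ∈ F, w j = c j := by
          constructor
          · intro h j hj
            have hji : j ≠ i := fun e => hiF (e ▸ hj)
            have := h j (Finset.mem_insert_of_mem hj)
            rwa [Function.update_of_ne hji] at this
          · intro h j hj
            by_cases hji : j = i
            · subst hji; simp
            · rw [Function.update_of_ne hji]
              exact h j (Finset.mem_of_mem_insert_of_ne hj hji)
        by_cases h : ∀ j ∈ F, w j = c j
        · rw [if_pos h, if_pos (hiff.2 h), Finset.compl_insert, ← Finset.mul_prod_erase _ _ hi]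
          congr 1
          exact hM.cpt_pa i w c (w i) fun j hj => h j (hpa j hj)
        · rw [if_neg h, if_neg (fun h' => h (hiff.1 h')), mul_zero]
      · intro x _ hx
        rw [if_neg, mul_zero]
        intro h
        have := h i (Finset.mem_insert_self i F)
        rw [Function.update_self] at this
        exact hx this.symm
      · simp
    simp_rw [hsplit]
    rw [Finset.sum_comm]
    simp_rw [← Finset.mul_sum, ih _ _ hcard, mul_one]
    exact hM.cpt_sum i c

section Core

variable {ν : Type} {Val : ν → Type} [Fintype ν] [∀ i, Fintype (Val i)]

/-- `P_{do(X = xv)}(Y = yv | U = u)` with the factor `P(U = u)` cancelled: the sum of the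
products of the endogenous, non-intervened tables over the worlds that agree with `a` on the
exogenous variables, with `xv` on `X` and with `yv` on `Y`. -/
def core (M : CM ν Val) (X : Finset ν) (xv : Asg Val) (Y : Finset ν) (yv a : Asg Val) : ℝ :=
  ∑ w : Asg Val,
    if ((∀ i ∈ M.exo, w i = a i) ∧ ∀ i ∈ Y, w i = yv i) ∧ ∀ i ∈ X, w i = xv i then
      ∏ i ∈ (M.exo ∪ X)ᶜ, M.cpt i w (w i) else 0

/-- On worlds agreeing with `a` on the exogenous variables, the exogenous part of a truncated
factorization is the constant `P(U = u)`. -/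
lemma prod_compl_split (M : CM ν Val) (hM : M.WF) (X : Finset ν) (hX : ∀ i ∈ X, i ∉ M.exo)
    (a w : Asg Val) (hw : ∀ i ∈ M.exo, w i = a i) :
    ∏ i ∈ Xᶜ, M.cpt i w (w i) =
      (∏ i ∈ M.exo, M.cpt i a (a i)) * ∏ i ∈ (M.exo ∪ X)ᶜ, M.cpt i w (w i) := by
  have hd : Disjoint M.exo (M.exo ∪ X)ᶜ := by
    rw [Finset.disjoint_left]
    intro i hi
    simp [hi]
  have hu : Xᶜ = M.exo ∪ (M.exo ∪ X)ᶜ := by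
    ext i
    have := hX i
    simp only [mem_compl, mem_union]
    tauto
  rw [hu, Finset.prod_union hd]
  congr 1
  refine Finset.prod_congr rfl fun i hi => ?_
  rw [hw i hi]
  refine hM.cpt_pa i w a _ fun j hj => ?_
  rw [hM.pa_exo i hi] at hj
  simp at hj

lemma cfBasic_eq_core (M : CM ν Val) (hM : M.WF) (X : Finset ν) (hX : ∀ i ∈ X, i ∉ M.exo)
    (xv : Asg Val) (Y : Finset ν) (yv a : Asg Val)
    (hE : (∏ i ∈ M.exo, M.cpt i a (a i)) ≠ 0) :
    M.cfBasic X xv Y yv a = M.core X xv Y yv a := by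
  have hnum : (∑ w' : Asg Val,
      if (∀ i ∈ M.exo, w' i = a i) ∧ ∀ i ∈ Y, w' i = yv i then M.pdo X xv w' else 0) =
      (∏ i ∈ M.exo, M.cpt i a (a i)) * M.core X xv Y yv a := by
    unfold core
    rw [Finset.mul_sum]
    refine Finset.sum_congr rfl fun w _ => ?_
    unfold pdo
    by_cases h1 : (∀ i ∈ M.exo, w i = a i) ∧ ∀ i ∈ Y, w i = yv i
    · by_cases h2 : ∀ i ∈ X, w i = xv i
      · rw [if_pos h1, if_pos h2, if_pos ⟨h1, h2⟩, prod_compl_split M hM X hX a w h1.1]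
      · rw [if_pos h1, if_neg h2, if_neg (fun h => h2 h.2), mul_zero]
    · rw [if_neg h1, if_neg (fun h => h1 h.1), mul_zero]
  have hden : (∑ w' : Asg Val, if ∀ i ∈ M.exo, w' i = a i then M.pdo X xv w' else 0) =
      ∏ i ∈ M.exo, M.cpt i a (a i) := by
    rw [← mul_one (∏ i ∈ M.exo, M.cpt i a (a i)),
      ← sum_trunc_eq_one M hM _ (M.exo ∪ X) (fun i => if i ∈ X then xv i else a i) rfl,
      Finset.mul_sum]
    refine Finset.sum_congr rfl fun w _ => ?_
    have hiff : (∀ i ∈ M.exo ∪ X, w i = if i ∈ X then xv i else a i) ↔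
        (∀ i ∈ M.exo, w i = a i) ∧ ∀ i ∈ X, w i = xv i := by
      constructor
      · intro h
        refine ⟨fun i hi => ?_, fun i hi => ?_⟩
        · have := h i (Finset.mem_union_left _ hi)
          rwa [if_neg (fun hx => hX i hx hi)] at this
        · have := h i (Finset.mem_union_right _ hi)
          rwa [if_pos hi] at this
      · rintro ⟨h1, h2⟩ i hi
        by_cases hx : i ∈ X
        · rw [if_pos hx]; exact h2 i hx
        · rw [if_neg hx]
          exact h1 i ((Finset.mem_union.1 hi).resolve_right hx)
    unfold pdo
    by_cases h1 : ∀ i ∈ M.exo, w i = a i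
    · by_cases h2 : ∀ i ∈ X, w i = xv i
      · rw [if_pos h1, if_pos h2, if_pos (hiff.2 ⟨h1, h2⟩), prod_compl_split M hM X hX a w h1]
      · rw [if_pos h1, if_neg h2, if_neg (fun h => h2 (hiff.1 h).2), mul_zero]
    · rw [if_neg h1, if_neg (fun h => h1 (hiff.1 h).1), mul_zero]
  unfold cfBasic
  rw [hnum, hden, mul_div_cancel_left₀ _ hE]

lemma refine_WF (M : CM ν Val) (hM : M.WF) (a : Asg Val) : (M.refine a).WF where
  pa_exo := hM.pa_exo
  acyclic := hM.acyclic
  cpt_pa := by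
    intro i w w' x h
    have hiff : (∀ j ∈ M.pa i, w j = a j) ↔ ∀ j ∈ M.pa i, w' j = a j :=
      ⟨fun H j hj => (h j hj).symm.trans (H j hj), fun H j hj => (h j hj).trans (H j hj)⟩
    simp only [refine, hiff, hM.cpt_pa i w w' x h]
  cpt_nonneg := by
    intro i w x
    simp only [refine]
    split_ifs
    · exact zero_le_one
    · exact le_rfl
    · exact hM.cpt_nonneg i w x
  cpt_sum := by
    intro i w
    simp only [refine]
    split_ifs
    · simp
    · exact hM.cpt_sum i w

/-! ### The PO-SCM with fixed potential outcomes -/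

/-- The world of the PO-SCM with original variables `v` and potential outcomes `b`. -/
def join (M : CM ν Val) (v : Asg Val) (b : Asg (POB M)) : Asg (SumVal Val (POB M)) := fun i =>
  match i with
  | .inl j => v j
  | .inr p => b p

/-- The `Fintype` instance is arbitrary, since the one arising from an instance of a general
definition at `ν ⊕ POI M` uses a different decidable equality than the one found directly. -/
lemma sum_join (M : CM ν Val) {inst : Fintype (Asg (SumVal Val (POB M)))}
    (f : Asg (SumVal Val (POB M)) → ℝ) :
    ∑ w, f w = ∑ v : Asg Val, ∑ b : Asg (POB M), f (M.join v b) := by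
  let e : Asg Val × Asg (POB M) ≃ Asg (SumVal Val (POB M)) :=
    { toFun := fun q => M.join q.1 q.2
      invFun := fun w => (fun i => w (Sum.inl i), fun p => w (Sum.inr p))
      left_inv := fun _ => rfl
      right_inv := fun w => by
        funext i
        cases i <;> rfl }
  rw [← e.sum_comp, Fintype.sum_prod_type]
  rfl

end Core

section PO

variable {ν : Type} {Val : ν → Type} [Fintype ν] [∀ i, Fintype (Val i)]
variable (M : CM ν Val)

/-- The restriction of a world to the parents of `i`. -/
def restr (i : ν) (w : Asg Val) : M.PaAsg i := fun k => w k.1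

/-- The deterministic model on the original variables obtained from the PO-SCM by fixing the
potential outcomes to `b`. -/
def Mb (b : Asg (POB M)) : CM ν Val where
  exo := M.exo
  pa := M.pa
  ord := M.ord
  cpt := fun i w x =>
    if h : i ∈ M.exo then M.cpt i w x
    else if x = b ⟨⟨i, h⟩, M.restr i w⟩ then 1 else 0

lemma Mb_WF (hM : M.WF) (b : Asg (POB M)) : (M.Mb b).WF where
  pa_exo := hM.pa_exo
  acyclic := hM.acyclic
  cpt_pa := by
    intro i w w' x h
    have hr : M.restr i w = M.restr i w' := funext fun k => h k.1 k.2
    by_cases hi : i ∈ M.exo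
    · simp only [Mb, dif_pos hi]
      exact hM.cpt_pa i w w' x h
    · simp only [Mb, dif_neg hi]
      rw [hr]
  cpt_nonneg := by
    intro i w x
    simp only [Mb]
    split_ifs
    · exact hM.cpt_nonneg i w x
    · exact zero_le_one
    · exact le_rfl
  cpt_sum := by
    intro i w
    simp only [Mb]
    split_ifs with h
    · exact hM.cpt_sum i w
    · exact (Finset.sum_ite_eq' univ _ _).trans (if_pos (mem_univ _))

variable [∀ i, Nonempty (Val i)]

/-- The probability of the configuration `b` of the potential outcome variables. -/
def Q (b : Asg (POB M)) : ℝ := ∏ p : POI M, M.cpt p.1.1 (M.extendPa p.1.1 p.2) (b p)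

lemma MN_joint (v : Asg Val) (b : Asg (POB M)) :
    M.MN.joint (M.join v b) = (∏ i, (M.Mb b).cpt i v (v i)) * M.Q b := by
  unfold joint
  rw [Fintype.prod_sum_type]
  rfl

lemma MN_pdo (X : Finset ν) (xv v : Asg Val) (b : Asg (POB M)) :
    M.MN.pdo (X.image Sum.inl) (liftAsg xv) (M.join v b) = (M.Mb b).pdo X xv v * M.Q b := by
  have hiff : (∀ i ∈ X.image (Sum.inl : ν → ν ⊕ POI M), M.join v b i = liftAsg xv i) ↔
      ∀ i ∈ X, v i = xv i := by
    constructor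
    · intro h i hi
      exact h (Sum.inl i) (Finset.mem_image_of_mem _ hi)
    · intro h i hi
      obtain ⟨j, hj, rfl⟩ := Finset.mem_image.1 hi
      exact h j hj
  unfold pdo
  by_cases h : ∀ i ∈ X, v i = xv i
  · rw [if_pos h, if_pos (hiff.2 h)]
    refine (Finset.prod_congr (s₂ := Xᶜ.disjSum univ) ?_ fun _ _ => rfl).trans ?_
    · ext i
      cases i <;> simp
    · rw [Finset.prod_disjSum]
      rfl
  · rw [if_neg h, if_neg (fun h' => h (hiff.1 h')), zero_mul]

/-- A sum over the worlds of the PO-SCM supported on those with potential outcomes `b` is a sum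
over the original variables. -/
lemma MN_sum {inst : Fintype (Asg (SumVal Val (POB M)))} (b : Asg (POB M))
    (f' : Asg (SumVal Val (POB M)) → ℝ) (f : Asg Val → ℝ)
    (h0 : ∀ v b', b' ≠ b → f' (M.join v b') = 0) (h1 : ∀ v, f' (M.join v b) = f v * M.Q b) :
    ∑ w', f' w' = (∑ v, f v) * M.Q b := by
  rw [sum_join, Finset.sum_mul]
  refine Finset.sum_congr rfl fun v _ => ?_
  rw [Finset.sum_eq_single b]
  · exact h1 v
  · intro b' _ hb
    exact h0 v b' hb
  · simp

lemma MN_exo_iff (a v : Asg Val) (b b' : Asg (POB M)) :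
    (∀ i ∈ M.MN.exo, M.join v b' i = M.join a b i) ↔ ((∀ i ∈ M.exo, v i = a i) ∧ b' = b) := by
  constructor
  · intro h
    refine ⟨fun i hi => ?_, funext fun p => ?_⟩
    · exact h (Sum.inl i) (Finset.mem_union_left _ (Finset.mem_image_of_mem _ hi))
    · exact h (Sum.inr p) (Finset.mem_union_right _ (Finset.mem_image_of_mem _ (mem_univ p)))
  · rintro ⟨h1, rfl⟩ i hi
    rcases Finset.mem_union.1 hi with hi | hi
    · obtain ⟨j, hj, rfl⟩ := Finset.mem_image.1 hi
      exact h1 j hj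
    · obtain ⟨p, _, rfl⟩ := Finset.mem_image.1 hi
      rfl

lemma MN_cfBasic (X : Finset ν) (xv : Asg Val) (Y : Finset ν) (yv a : Asg Val)
    (b : Asg (POB M)) (hQ : M.Q b ≠ 0) :
    M.MN.cfBasic (X.image Sum.inl) (liftAsg xv) (Y.image Sum.inl) (liftAsg yv) (M.join a b) =
      (M.Mb b).cfBasic X xv Y yv a := by
  have hY : ∀ v, (∀ i ∈ Y.image (Sum.inl : ν → ν ⊕ POI M), M.join v b i = liftAsg yv i) ↔
      ∀ i ∈ Y, v i = yv i := by
    intro v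
    constructor
    · intro h i hi
      exact h (Sum.inl i) (Finset.mem_image_of_mem _ hi)
    · intro h i hi
      obtain ⟨j, hj, rfl⟩ := Finset.mem_image.1 hi
      exact h j hj
  have hU : ∀ v, (∀ i ∈ M.MN.exo, M.join v b i = M.join a b i) ↔
      ∀ i ∈ (M.Mb b).exo, v i = a i := by
    intro v
    rw [M.MN_exo_iff a v b b]
    exact and_iff_left rfl
  unfold cfBasic
  rw [M.MN_sum b _ (fun v => if (∀ i ∈ (M.Mb b).exo, v i = a i) ∧ ∀ i ∈ Y, v i = yv i then
      (M.Mb b).pdo X xv v else 0),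
    M.MN_sum b _ (fun v => if ∀ i ∈ (M.Mb b).exo, v i = a i then (M.Mb b).pdo X xv v else 0),
    mul_div_mul_right _ _ hQ]
  · intro v b' hb
    exact if_neg fun h => hb ((M.MN_exo_iff a v b b').1 h).2
  · intro v
    simp only [hU, MN_pdo, ite_mul, zero_mul]
  · intro v b' hb
    exact if_neg fun h => hb ((M.MN_exo_iff a v b b').1 h.1).2
  · intro v
    simp only [hU, hY, MN_pdo, ite_mul, zero_mul]

/-! ### Averaging over the potential outcomes -/

/-- Contribution of a single endogenous variable `i`: the potential outcomes of `i` are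
independent, the actual world pins the one at the actual parents, and the counterfactual world
`v` (when `i ∉ T`) pins the one at its own parents. -/
lemma prod_PaAsg (hM : M.WF) (a v : Asg Val) (T : Finset ν) (i : ν) (hi : i ∉ M.exo) :
    ∏ κ : M.PaAsg i, ∑ x : Val i, M.cpt i (M.extendPa i κ) x *
        ((if κ = M.restr i a then (if a i = x then 1 else 0) else 1) *
         (if i ∉ T ∧ κ = M.restr i v then (if v i = x then 1 else 0) else 1)) =
      M.cpt i a (a i) * (if i ∉ T then (M.refine a).cpt i v (v i) else 1) := by
  have hext : ∀ (w : Asg Val) x, M.cpt i (M.extendPa i (M.restr i w)) x = M.cpt i w x := by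
    intro w x
    refine hM.cpt_pa i _ _ x fun j hj => ?_
    simp [extendPa, restr, hj]
  have hres : (M.restr i v = M.restr i a) ↔ ∀ j ∈ M.pa i, v j = a j :=
    ⟨fun h j hj => congrFun h ⟨j, hj⟩, fun h => funext fun k => h k.1 k.2⟩
  have hfac : ∀ κ : M.PaAsg i, ∑ x : Val i, M.cpt i (M.extendPa i κ) x *
        ((if κ = M.restr i a then (if a i = x then 1 else 0) else 1) *
         (if i ∉ T ∧ κ = M.restr i v then (if v i = x then 1 else 0) else 1)) =
      (if κ = M.restr i a then M.cpt i a (a i) else 1) *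
      (if κ = M.restr i v then (if i ∉ T then (M.refine a).cpt i v (v i) else 1) else 1) := by
    intro κ
    by_cases hT : i ∈ T
    · by_cases h1 : κ = M.restr i a
      · simp [hT, h1, hext]
      · simp [hT, h1, hM.cpt_sum]
    · by_cases h1 : κ = M.restr i a
      · by_cases h2 : κ = M.restr i v
        · have h3 := hres.1 (h2.symm.trans h1)
          have hr : (M.refine a).cpt i v (v i) = if v i = a i then 1 else 0 := by
            simp only [refine]
            rw [if_pos ⟨hi, h3⟩]
          simp only [hT, not_false_eq_true, true_and, if_pos h1, if_pos h2, if_true, hr]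
          rw [h1]
          simp only [hext]
          rw [Finset.sum_eq_single (a i)]
          · simp
          · intro x _ hx
            simp [Ne.symm hx]
          · simp
        · simp only [hT, not_false_eq_true, true_and, if_pos h1, if_neg h2, mul_one]
          rw [h1]
          simp [hext]
      · by_cases h2 : κ = M.restr i v
        · have hr : (M.refine a).cpt i v (v i) = M.cpt i v (v i) := by
            simp only [refine]
            rw [if_neg]
            rintro ⟨_, h⟩
            exact h1 (h2.trans (hres.2 h))
          simp only [hT, not_false_eq_true, true_and, if_neg h1, if_pos h2, if_true, hr, one_mul]
          rw [h2]
          simp [hext]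
        · simp [h1, h2, hM.cpt_sum]
  rw [Finset.prod_congr rfl fun κ _ => hfac κ, Finset.prod_mul_distrib]
  simp

/-- Averaging over the potential outcomes: conditionally on the actual world `a`, the joint
structural equations of a world `v` outside `T` hold with the probability given by the tables
of the actualized refinement. -/
lemma sum_Mb (hM : M.WF) (a v : Asg Val) (T : Finset ν) (hT : M.exo ⊆ T) :
    ∑ b : Asg (POB M), (∏ i ∈ Tᶜ, (M.Mb b).cpt i v (v i)) *
        ((∏ i, (M.Mb b).cpt i a (a i)) * M.Q b) =
      M.joint a * ∏ i ∈ Tᶜ, (M.refine a).cpt i v (v i) := by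
  -- a product over all variables splits into exogenous and endogenous factors
  have hsplit : ∀ f : ν → ℝ, ∏ i, f i =
      (∏ i ∈ M.exo, f i) * ∏ i : {i : ν // i ∉ M.exo}, f i.1 := by
    intro f
    rw [← Finset.prod_mul_prod_compl M.exo f]
    congr 1
    exact Finset.prod_subtype _ (by simp) f
  have hsplitT : ∀ f : ν → ℝ, ∏ i ∈ Tᶜ, f i =
      ∏ i : {i : ν // i ∉ M.exo}, if i.1 ∉ T then f i.1 else 1 := by
    intro f
    have h1 : ∏ i ∈ Tᶜ, f i = ∏ i, if i ∉ T then f i else 1 := by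
      rw [← Finset.prod_filter]
      congr 1
      ext i
      simp
    rw [h1, hsplit, Finset.prod_eq_one, one_mul]
    intro i hi
    simp [hT hi]
  let g : (p : POI M) → POB M p → ℝ := fun p x =>
    M.cpt p.1.1 (M.extendPa p.1.1 p.2) x *
        ((if p.2 = M.restr p.1.1 a then (if a p.1.1 = x then 1 else 0) else 1) *
         (if p.1.1 ∉ T ∧ p.2 = M.restr p.1.1 v then (if v p.1.1 = x then 1 else 0) else 1))
  have hterm : ∀ b : Asg (POB M), (∏ i ∈ Tᶜ, (M.Mb b).cpt i v (v i)) *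
        ((∏ i, (M.Mb b).cpt i a (a i)) * M.Q b) =
      (∏ i ∈ M.exo, M.cpt i a (a i)) * ∏ p : POI M, g p (b p) := by
    intro b
    have hg : ∏ p : POI M, g p (b p) =
        ∏ i : {i : ν // i ∉ M.exo}, ∏ κ : M.PaAsg i.1, g ⟨i, κ⟩ (b ⟨i, κ⟩) :=
      Fintype.prod_sigma _
    have hQ : M.Q b = ∏ i : {i : ν // i ∉ M.exo}, ∏ κ : M.PaAsg i.1,
        M.cpt i.1 (M.extendPa i.1 κ) (b ⟨i, κ⟩) :=
      Fintype.prod_sigma _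
    rw [hg, hQ, hsplitT, hsplit (fun i => (M.Mb b).cpt i a (a i))]
    have hexo : ∏ i ∈ M.exo, (M.Mb b).cpt i a (a i) = ∏ i ∈ M.exo, M.cpt i a (a i) :=
      Finset.prod_congr rfl fun i hi => by simp [Mb, hi]
    rw [hexo]
    have hloc : ∀ i : {i : ν // i ∉ M.exo}, ∏ κ : M.PaAsg i.1, g ⟨i, κ⟩ (b ⟨i, κ⟩) =
        (if i.1 ∉ T then (M.Mb b).cpt i.1 v (v i.1) else 1) * ((M.Mb b).cpt i.1 a (a i.1) *
          ∏ κ : M.PaAsg i.1, M.cpt i.1 (M.extendPa i.1 κ) (b ⟨i, κ⟩)) := by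
      intro i
      have hind : ∀ w : Asg Val,
          (∏ κ : M.PaAsg i.1, if κ = M.restr i.1 w then
            (if w i.1 = b ⟨i, κ⟩ then (1 : ℝ) else 0) else 1) =
          (M.Mb b).cpt i.1 w (w i.1) := by
        intro w
        rw [Finset.prod_ite_eq', if_pos (mem_univ _)]
        simp only [Mb, dif_neg i.2]
      rw [← hind a, ← hind v]
      simp only [g]
      rw [Finset.prod_mul_distrib, Finset.prod_mul_distrib]
      by_cases hiT : i.1 ∈ T
      · simp only [hiT, not_true_eq_false, false_and, if_false, Finset.prod_const_one]
        ring
      · simp only [hiT, not_false_eq_true, true_and, if_true]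
        ring
    rw [Finset.prod_congr rfl fun i _ => hloc i, Finset.prod_mul_distrib, Finset.prod_mul_distrib]
    ring
  rw [Finset.sum_congr rfl fun b _ => hterm b, ← Finset.mul_sum]
  have hps : ∑ b : Asg (POB M), ∏ p : POI M, g p (b p) = ∏ p : POI M, ∑ x, g p x := by
    rw [Finset.prod_univ_sum, Fintype.piFinset_univ]
  have hps2 : ∏ p : POI M, ∑ x, g p x =
      ∏ i : {i : ν // i ∉ M.exo}, ∏ κ : M.PaAsg i.1, ∑ x : Val i.1, g ⟨i, κ⟩ x :=
    Fintype.prod_sigma _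
  rw [hps, hps2, Finset.prod_congr rfl fun (i : {i : ν // i ∉ M.exo}) _ => M.prod_PaAsg hM a v T i.1 i.2,
    Finset.prod_mul_distrib, ← hsplitT (fun i => (M.refine a).cpt i v (v i)), ← mul_assoc,
    ← hsplit (fun i => M.cpt i a (a i))]
  rfl

end PO

end CM

/-- **Theorem 1.** Given a causal model `M`, for every `(u, v) ∈ R(U ∪ V)` with
`P_M(u, v) > 0` and all `Y, X ⊆ V`, `y ∈ R(Y)`, `x ∈ R(X)`: the B-probability of the
basic counterfactual equals the probability of the basic counterfactual computed in the
PO-SCM, conditional on the exogenous and endogenous variables of `M` only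
(marginalizing over the potential outcome variables):
`P^B(y_x | u, v) = P^N(y_x | u, v)`. -/
theorem pbBasic_eq_pnBasicCond
    {ν : Type} {Val : ν → Type} [Fintype ν] [∀ i, Fintype (Val i)] [∀ i, Nonempty (Val i)]
    (M : CM ν Val) (hM : M.WF) (a : Asg Val) (ha : 0 < M.joint a)
    (X : Finset ν) (hX : ∀ i ∈ X, i ∉ M.exo) (xv : Asg Val)
    (Y : Finset ν) (hY : ∀ i ∈ Y, i ∉ M.exo) (yv : Asg Val) :
    M.pbBasic a X xv Y yv = M.pnBasicCond a X xv Y yv := by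
  have hE : (∏ i ∈ M.exo, M.cpt i a (a i)) ≠ 0 := by
    rw [Finset.prod_ne_zero_iff]
    intro i _
    exact (Finset.prod_ne_zero_iff.1 ha.ne') i (mem_univ i)
  have hEr : (∏ i ∈ (M.refine a).exo, (M.refine a).cpt i a (a i)) ≠ 0 := by
    convert hE using 1
    refine Finset.prod_congr rfl fun i hi => ?_
    have hi' : i ∈ M.exo := hi
    simp [CM.refine, hi']
  have hEb : ∀ b, (∏ i ∈ (M.Mb b).exo, (M.Mb b).cpt i a (a i)) ≠ 0 := by
    intro b
    convert hE using 1
    refine Finset.prod_congr rfl fun i hi => ?_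
    have hi' : i ∈ M.exo := hi
    simp [CM.Mb, hi']
  -- conditioning on the original variables leaves a sum over the potential outcomes
  have hsum : ∀ f : Asg (SumVal Val (CM.POB M)) → ℝ,
      (∑ w : Asg (SumVal Val (CM.POB M)), if ∀ i : ν, w (Sum.inl i) = a i then f w else 0) =
        ∑ b : Asg (CM.POB M), f (M.join a b) := by
    intro f
    rw [CM.sum_join, Finset.sum_eq_single a]
    · refine Finset.sum_congr rfl fun b _ => ?_
      rw [if_pos]
      intro i
      rfl
    · intro v _ hv
      refine Finset.sum_eq_zero fun b _ => ?_
      rw [if_neg]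
      intro h
      exact hv (funext h)
    · simp
  have hden : ∑ b : Asg (CM.POB M), M.MN.joint (M.join a b) = M.joint a := by
    have := M.sum_Mb hM a a univ (Finset.subset_univ _)
    simpa [CM.MN_joint] using this
  have hnum : ∑ b : Asg (CM.POB M), M.MN.cfBasic (X.image Sum.inl) (liftAsg xv)
        (Y.image Sum.inl) (liftAsg yv) (M.join a b) * M.MN.joint (M.join a b) =
      M.joint a * (M.refine a).core X xv Y yv a := by
    have hb : ∀ b : Asg (CM.POB M), M.MN.cfBasic (X.image Sum.inl) (liftAsg xv)
        (Y.image Sum.inl) (liftAsg yv) (M.join a b) * M.MN.joint (M.join a b) =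
        (M.Mb b).core X xv Y yv a * ((∏ i, (M.Mb b).cpt i a (a i)) * M.Q b) := by
      intro b
      rw [CM.MN_joint]
      -- if `Q b = 0` the conditional probability is the junk value `0 / 0`, but has weight zero
      by_cases hQ : M.Q b = 0
      · simp [hQ]
      · rw [M.MN_cfBasic X xv Y yv a b hQ,
          CM.cfBasic_eq_core _ (M.Mb_WF hM b) X hX xv Y yv a (hEb b)]
    rw [Finset.sum_congr rfl fun b _ => hb b]
    unfold CM.core
    rw [Finset.mul_sum]
    simp_rw [Finset.sum_mul]
    rw [Finset.sum_comm]
    refine Finset.sum_congr rfl fun v _ => ?_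
    simp only [show (M.refine a).exo = M.exo from rfl,
      show ∀ b, (M.Mb b).exo = M.exo from fun _ => rfl]
    by_cases h : ((∀ i ∈ M.exo, v i = a i) ∧ ∀ i ∈ Y, v i = yv i) ∧ ∀ i ∈ X, v i = xv i
    · rw [if_pos h, ← M.sum_Mb hM a v (M.exo ∪ X) Finset.subset_union_left]
      refine Finset.sum_congr rfl fun b _ => ?_
      rw [if_pos h]
    · rw [if_neg h, mul_zero]
      refine Finset.sum_eq_zero fun b _ => ?_
      rw [if_neg h, zero_mul]
  unfold CM.pbBasic CM.pnBasicCond extBasicCond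
  rw [CM.cfBasic_eq_core _ (M.refine_WF hM a) X hX xv Y yv a hEr, hsum, hsum, hnum, hden,
    mul_div_cancel_left₀ _ ha.ne']

end
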